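/- The set Sk of sketches over (Σ, ⟨·⟩, Λ), with the operations ⊓ and ⊔ defined on languages and labelings as given, forms a lattice: ⊓ and ⊔ are well-defined on sketches (in particular they preserve nonemptiness, prefix-closedness and regularity of the languages and the regular-fiber condition on the labelings) and satisfy the lattice axioms for the order X ⊴ Y defined by X ⊓ Y = X. Moreover Sk has a top element, the sketch with language {ε} and single node labeled ⊤ ∈ Λ; and if Σ is finite, Sk has a bottom element, the sketch with language Σ* and labeling ν(w) = ⊥ when ⟨w⟩ = ⊕ and ν(w) = ⊤ when ⟨w⟩ = ⊖. -/

import Mathlib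

open scoped Classical

/-- The two-element sign monoid `{⊕, ⊖}` of variances. -/
inductive Sign : Type where
  | pos
  | neg
deriving DecidableEq, Repr

/-- Multiplication in the sign monoid (`⊕` is the identity, `⊖ · ⊖ = ⊕`). -/
def Sign.mul : Sign → Sign → Sign
  | .pos, s => s
  | .neg, .pos => .neg
  | .neg, .neg => .pos

/-- Variance of a word in `Σ*`: `⟨ε⟩ = ⊕`, `⟨xw⟩ = ⟨x⟩·⟨w⟩`. -/
def wordSign {L : Type} (sgn : L → Sign) : List L → Sign
  | [] => .pos
  | x :: w => (sgn x).mul (wordSign sgn w)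

/-- A sketch over `(Σ, Λ)`: a regular tree with edges labeled by elements of
`Σ` and nodes marked with elements of `Λ`, having only finitely many subtrees
up to labeled isomorphism.  Equivalently (and as represented here), a
deterministic finite-state automaton, all of whose states are accepting, with
partial transition function and each state labeled by an element of `Λ`.  Its
language is automatically a nonempty prefix-closed regular language and the
fibers of its labeling are automatically regular. -/
structure Sketch (L Λ : Type) : Type 1 where
  State : Type
  finite : Finite State
  init : State
  step : State → L → Option State
  lab : State → Λ

/-- The (partial) run of a sketch automaton on a word. -/
def Sketch.run {L Λ : Type} (S : Sketch L Λ) (w : List L) : Option S.State :=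
  List.foldlM S.step S.init w

/-- The node marking of a sketch, as a partial function on words:
`S.node w = some λ` iff `w ∈ ℒ(S)` and the node of `S` reached by following
`w` from the root is marked `λ`; `S.node w = none` iff `w ∉ ℒ(S)`. -/
def Sketch.node {L Λ : Type} (S : Sketch L Λ) (w : List L) : Option Λ :=
  (S.run w).map S.lab

/-- The language `ℒ(S) ⊆ Σ*` of a sketch. -/
def Sketch.lang {L Λ : Type} (S : Sketch L Λ) : Set (List L) :=
  {w | S.node w ≠ none}

/-- Two sketches are equal as sketches (i.e., as `Λ`-labeled regular trees)
when they have the same language and the same node markings. -/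
def Sketch.Equiv {L Λ : Type} (X Y : Sketch L Λ) : Prop :=
  ∀ w : List L, X.node w = Y.node w

theorem Sign.pos_mul (s : Sign) : Sign.pos.mul s = s := rfl

theorem Sign.mul_pos (s : Sign) : s.mul .pos = s := by cases s <;> rfl

theorem Sign.mul_assoc (s t u : Sign) : (s.mul t).mul u = s.mul (t.mul u) := by
  cases s <;> cases t <;> cases u <;> rfl

instance Sign.instFinite : Finite Sign :=
  Finite.of_surjective (fun b : Bool => if b then Sign.pos else Sign.neg) fun
    | .pos => ⟨true, rfl⟩
    | .neg => ⟨false, rfl⟩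

theorem foldl_sign {L : Type} (sgn : L → Sign) (s : Sign) (w : List L) :
    w.foldl (fun s x => s.mul (sgn x)) s = s.mul (wordSign sgn w) := by
  induction w generalizing s with
  | nil => exact s.mul_pos.symm
  | cons x w ih => rw [List.foldl_cons, ih, Sign.mul_assoc, wordSign]

namespace Sketch

variable {L Λ : Type}

/-- The sketch of a finite automaton with total transition function whose states carry optional
labels: the unlabeled states are removed. -/
def ofTotal {Q : Type} [Finite Q] [Inhabited Λ] (init : Q) (δ : Q → L → Q) (out : Q → Option Λ) :
    Sketch L Λ where
  State := Q
  finite := inferInstance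
  init := init
  step q x := if out (δ q x) = none then none else some (δ q x)
  lab q := (out q).getD default

theorem node_ofTotal {Q : Type} [Finite Q] [Inhabited Λ] {init : Q} {δ : Q → L → Q}
    {out : Q → Option Λ} (hinit : out init ≠ none)
    (hdead : ∀ q x, out q = none → out (δ q x) = none) (w : List L) :
    (ofTotal init δ out).node w = out (w.foldl δ init) := by
  have dead : ∀ (w : List L) q, out q = none → out (w.foldl δ q) = none := by
    intro w
    induction w with
    | nil => exact fun _ h => h
    | cons x w ih => exact fun q h => ih _ (hdead q x h)
  have live : ∀ (w : List L) q, out q ≠ none →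
      (List.foldlM (fun q x => if out (δ q x) = none then none else some (δ q x)) q w).map
        (fun q => (out q).getD default) = out (w.foldl δ q) := by
    intro w
    induction w with
    | nil =>
      intro q h
      obtain ⟨a, ha⟩ := Option.ne_none_iff_exists'.1 h
      change some ((out q).getD default) = out q
      rw [ha, Option.getD_some]
    | cons x w ih =>
      intro q _
      rw [List.foldlM_cons, List.foldl_cons]
      by_cases hx : out (δ q x) = none
      · rw [if_pos hx, dead w _ hx]
        rfl
      · rw [if_neg hx]
        exact ih _ hx
  exact live w init hinit

theorem node_nil (X : Sketch L Λ) : X.node [] = some (X.lab X.init) := rfl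

/-- The transition function of the product of two sketches and the variance automaton. -/
def prodStep (sgn : L → Sign) (X Y : Sketch L Λ) :
    Option X.State × Option Y.State × Sign → L → Option X.State × Option Y.State × Sign :=
  fun q x => (q.1.bind (X.step · x), q.2.1.bind (Y.step · x), q.2.2.mul (sgn x))

theorem foldl_bind_step (X : Sketch L Λ) (p : Option X.State) (w : List L) :
    w.foldl (fun p x => p.bind (X.step · x)) p = p.bind (List.foldlM X.step · w) := by
  induction w generalizing p with
  | nil => cases p <;> rfl
  | cons x w ih => rw [List.foldl_cons, ih]; cases p <;> rfl

theorem foldl_prodStep (sgn : L → Sign) (X Y : Sketch L Λ) (w : List L) :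
    w.foldl (prodStep sgn X Y) (some X.init, some Y.init, .pos) =
      (X.run w, Y.run w, wordSign sgn w) := by
  have h : ∀ (p : Option X.State) (q : Option Y.State) (s : Sign),
      w.foldl (prodStep sgn X Y) (p, q, s) =
        (w.foldl (fun p x => p.bind (X.step · x)) p,
          w.foldl (fun q x => q.bind (Y.step · x)) q,
          w.foldl (fun s x => s.mul (sgn x)) s) := by
    induction w with
    | nil => exact fun _ _ _ => rfl
    | cons x w ih => exact fun _ _ _ => ih _ _ _
  rw [h, foldl_bind_step, foldl_bind_step, foldl_sign, Sign.pos_mul]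
  rfl

/-- Combine two sketches nodewise by an operation on optional labels that may depend on the
variance. -/
def combine [Inhabited Λ] (sgn : L → Sign) (f : Sign → Option Λ → Option Λ → Option Λ)
    (X Y : Sketch L Λ) : Sketch L Λ :=
  haveI := X.finite
  haveI := Y.finite
  ofTotal (some X.init, some Y.init, .pos) (prodStep sgn X Y)
    fun q => f q.2.2 (q.1.map X.lab) (q.2.1.map Y.lab)

theorem node_combine [Inhabited Λ] (sgn : L → Sign) {f : Sign → Option Λ → Option Λ → Option Λ}
    (hsome : ∀ s a b, f s (some a) (some b) ≠ none)
    (hnone : ∀ s t a b a' b', (a = none → a' = none) → (b = none → b' = none) →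
      f s a b = none → f t a' b' = none)
    (X Y : Sketch L Λ) (w : List L) :
    (combine sgn f X Y).node w = f (wordSign sgn w) (X.node w) (Y.node w) := by
  have := X.finite
  have := Y.finite
  rw [combine, node_ofTotal, foldl_prodStep]
  · rfl
  · exact hsome _ _ _
  · rintro ⟨p, q, s⟩ x h
    refine hnone _ _ _ _ _ _ (fun hp => ?_) (fun hq => ?_) h
    · rw [Option.map_eq_none_iff] at hp
      subst hp
      rfl
    · rw [Option.map_eq_none_iff] at hq
      subst hq
      rfl

section LabelOperations

variable [Lattice Λ]

/-- The label of a node of the meet of two sketches. -/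
def meetLabel (s : Sign) (a b : Option Λ) : Option Λ :=
  Option.merge (fun a b => if s = .pos then a ⊓ b else a ⊔ b) a b

/-- The label of a node of the join of two sketches. -/
def joinLabel (s : Sign) (a b : Option Λ) : Option Λ :=
  Option.map₂ (fun a b => if s = .pos then a ⊔ b else a ⊓ b) a b

theorem meetLabel_comm (s : Sign) (a b : Option Λ) : meetLabel s a b = meetLabel s b a := by
  cases s <;> cases a <;> cases b <;> simp [meetLabel, inf_comm, sup_comm]

theorem joinLabel_comm (s : Sign) (a b : Option Λ) : joinLabel s a b = joinLabel s b a := by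
  cases s <;> cases a <;> cases b <;> simp [joinLabel, inf_comm, sup_comm]

theorem meetLabel_assoc (s : Sign) (a b c : Option Λ) :
    meetLabel s (meetLabel s a b) c = meetLabel s a (meetLabel s b c) := by
  cases s <;> cases a <;> cases b <;> cases c <;> simp [meetLabel, inf_assoc, sup_assoc]

theorem joinLabel_assoc (s : Sign) (a b c : Option Λ) :
    joinLabel s (joinLabel s a b) c = joinLabel s a (joinLabel s b c) := by
  cases s <;> cases a <;> cases b <;> cases c <;> simp [joinLabel, inf_assoc, sup_assoc]

theorem meetLabel_joinLabel_self (s : Sign) (a b : Option Λ) :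
    meetLabel s a (joinLabel s a b) = a := by
  cases s <;> cases a <;> cases b <;> simp [meetLabel, joinLabel]

theorem joinLabel_meetLabel_self (s : Sign) (a b : Option Λ) :
    joinLabel s a (meetLabel s a b) = a := by
  cases s <;> cases a <;> cases b <;> simp [meetLabel, joinLabel]

theorem meetLabel_eq_left_iff (s : Sign) (a b : Option Λ) :
    meetLabel s a b = a ↔ joinLabel s a b = b := by
  cases s <;> cases a <;> cases b <;> simp [meetLabel, joinLabel]

theorem node_combine_meetLabel [Inhabited Λ] (sgn : L → Sign) (X Y : Sketch L Λ) (w : List L) :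
    (combine sgn meetLabel X Y).node w = meetLabel (wordSign sgn w) (X.node w) (Y.node w) := by
  refine node_combine sgn (fun _ _ _ => Option.some_ne_none _) ?_ X Y w
  rintro s t (_ | a) (_ | b) a' b' ha hb h
  · rw [ha rfl, hb rfl]
    rfl
  all_goals exact absurd h (Option.some_ne_none _)

theorem node_combine_joinLabel [Inhabited Λ] (sgn : L → Sign) (X Y : Sketch L Λ) (w : List L) :
    (combine sgn joinLabel X Y).node w = joinLabel (wordSign sgn w) (X.node w) (Y.node w) := by
  refine node_combine sgn (fun _ _ _ => Option.some_ne_none _) ?_ X Y w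
  rintro s t (_ | a) b a' b' ha hb h
  · rw [ha rfl]
    rfl
  · cases b with
    | none => rw [hb rfl]; cases a' <;> rfl
    | some b => exact absurd h (Option.some_ne_none _)

end LabelOperations

/-- The sketch with language `{ε}` and single node labeled `⊤`. -/
def top [Top Λ] : Sketch L Λ where
  State := Unit
  finite := inferInstance
  init := ()
  step _ _ := none
  lab _ := ⊤

theorem node_top [Top Λ] (w : List L) :
    (top : Sketch L Λ).node w = if w = [] then some ⊤ else none := by
  cases w with
  | nil => exact (if_pos rfl).symm
  | cons x w => exact (if_neg (List.cons_ne_nil x w)).symm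

/-- The sketch with language `Σ*`, labeled `⊥` on covariant and `⊤` on contravariant words. -/
def bot [Top Λ] [Bot Λ] (sgn : L → Sign) : Sketch L Λ :=
  haveI : Inhabited Λ := ⟨⊤⟩
  ofTotal Sign.pos (fun s x => s.mul (sgn x)) fun s => some (if s = .pos then ⊥ else ⊤)

theorem node_bot [Top Λ] [Bot Λ] (sgn : L → Sign) (w : List L) :
    (bot sgn : Sketch L Λ).node w = some (if wordSign sgn w = .pos then ⊥ else ⊤) := by
  let : Inhabited Λ := ⟨⊤⟩
  rw [bot, node_ofTotal, foldl_sign, Sign.pos_mul]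
  · exact Option.some_ne_none _
  · exact fun _ _ h => absurd h (Option.some_ne_none _)

end Sketch

open Sketch

/-- the set of sketches over `(Σ, ⟨·⟩, Λ)` (with `Σ` finite and
`Λ` a bounded lattice) forms a lattice.  There are well-defined meet `⊓` and
join `⊔` operations on sketches whose languages and node markings are given by
the prescribed formulas (`ℒ(X ⊓ Y) = ℒ(X) ∪ ℒ(Y)`, `ℒ(X ⊔ Y) = ℒ(X) ∩ ℒ(Y)`,
with node labels combined by `∧`/`∨` according to the variance of the word,
and inherited from the unique side on language differences for `⊓`).  These
operations satisfy the lattice axioms (commutativity, associativity and the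
absorption laws, hence idempotency) up to equality of sketches, for the order
`X ⊴ Y` defined by `X ⊓ Y = X`.  Moreover there is a top element: the sketch
with language `{ε}` whose single node is labeled `⊤ ∈ Λ`; and (as `Σ` is
finite) a bottom element: the sketch with language `Σ*` and labeling
`ν(w) = ⊥` when `⟨w⟩ = ⊕` and `ν(w) = ⊤` when `⟨w⟩ = ⊖`. -/
theorem sketches_form_lattice {L Λ : Type} [Finite L] [Lattice Λ]
    [BoundedOrder Λ] (sgn : L → Sign) :
    ∃ inf sup : Sketch L Λ → Sketch L Λ → Sketch L Λ,
      -- the meet has the prescribed language and node markings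
      (∀ X Y : Sketch L Λ, ∀ w : List L,
        (inf X Y).node w =
          match X.node w, Y.node w with
          | some a, some b =>
              some (if wordSign sgn w = .pos then a ⊓ b else a ⊔ b)
          | some a, none => some a
          | none, some b => some b
          | none, none => none) ∧
      -- the join has the prescribed language and node markings
      (∀ X Y : Sketch L Λ, ∀ w : List L,
        (sup X Y).node w =
          match X.node w, Y.node w with
          | some a, some b =>
              some (if wordSign sgn w = .pos then a ⊔ b else a ⊓ b)
          | _, _ => none) ∧
      -- lattice axioms, up to equality of sketches
      (∀ X Y, (inf X Y).Equiv (inf Y X)) ∧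
      (∀ X Y Z, (inf (inf X Y) Z).Equiv (inf X (inf Y Z))) ∧
      (∀ X Y, (sup X Y).Equiv (sup Y X)) ∧
      (∀ X Y Z, (sup (sup X Y) Z).Equiv (sup X (sup Y Z))) ∧
      (∀ X Y, (inf X (sup X Y)).Equiv X) ∧
      (∀ X Y, (sup X (inf X Y)).Equiv X) ∧
      -- the order X ⊴ Y given by X ⊓ Y = X is equivalently sup-absorption
      (∀ X Y, (inf X Y).Equiv X ↔ (sup X Y).Equiv Y) ∧
      -- top element: language {ε}, single node labeled ⊤
      (∃ T : Sketch L Λ,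
        (∀ w : List L, T.node w = if w = [] then some ⊤ else none) ∧
        ∀ X, (inf X T).Equiv X) ∧
      -- bottom element: language Σ*, labeled ⊥ on covariant words, ⊤ on
      -- contravariant words
      (∃ B : Sketch L Λ,
        (∀ w : List L,
          B.node w = some (if wordSign sgn w = .pos then ⊥ else ⊤)) ∧
        ∀ X, (inf B X).Equiv B) := by
  have : Inhabited Λ := ⟨⊤⟩
  have hinf := node_combine_meetLabel (Λ := Λ) sgn
  have hsup := node_combine_joinLabel (Λ := Λ) sgn
  refine ⟨combine sgn meetLabel, combine sgn joinLabel, ?_, ?_, ?_, ?_, ?_, ?_, ?_, ?_, ?_,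
    ⟨top, node_top, ?_⟩, ⟨bot sgn, node_bot sgn, ?_⟩⟩
  · intro X Y w
    rw [hinf]
    cases X.node w <;> cases Y.node w <;> rfl
  · intro X Y w
    rw [hsup]
    cases X.node w <;> cases Y.node w <;> rfl
  · intro X Y w
    simp only [hinf, meetLabel_comm]
  · intro X Y Z w
    simp only [hinf, meetLabel_assoc]
  · intro X Y w
    simp only [hsup, joinLabel_comm]
  · intro X Y Z w
    simp only [hsup, joinLabel_assoc]
  · intro X Y w
    simp only [hinf, hsup, meetLabel_joinLabel_self]
  · intro X Y w
    simp only [hinf, hsup, joinLabel_meetLabel_self]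
  · intro X Y
    simp only [Sketch.Equiv, hinf, hsup, meetLabel_eq_left_iff]
  · intro X w
    rw [hinf, node_top]
    split_ifs with hw
    · subst hw
      simp [node_nil, meetLabel, wordSign]
    · cases X.node w <;> rfl
  · intro X w
    rw [hinf, node_bot]
    cases X.node w <;> cases wordSign sgn w <;> simp [meetLabel]
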